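/- arXiv:1402.6608 — 8 statements merged into one kernel-verified Lean document; each statement's English description precedes it below -/
import Mathlib

section
/- Let k be a field, G a group, n ≥ 1, and ρ : G →* GL(n,k) a representation of G on V = kⁿ, with the induced action of G on the polynomial ring k[x₁,…,xₙ] given by (g·f)(w) = f(ρ(g)⁻¹w). Suppose v ∈ V is fixed by every element of G, and f is a G-invariant homogeneous polynomial of degree d > 0 with f(v) ≠ 0, where the characteristic of k does not divide d. Then there exists a G-invariant polynomial of degree 1 (a G-invariant linear form plus possibly no constant term) f̃ with f̃(v) ≠ 0. -/
open MvPolynomial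

/-- The action of a matrix `M` on polynomial functions on `kⁿ`: the `k`-algebra substitution
sending the coordinate `xᵢ` to `∑ⱼ M i j • xⱼ`, i.e. `(M · f)(w) = f (M ᵀ... )`.
Applied with `M = ρ(g)⁻¹`, this realises the action `(g·f)(w) = f(ρ(g)⁻¹ w)`. -/
noncomputable def matrixSubst {k : Type*} [Field k] {n : ℕ}
    (M : Matrix (Fin n) (Fin n) k) :
    MvPolynomial (Fin n) k →ₐ[k] MvPolynomial (Fin n) k :=
  MvPolynomial.aeval fun i => ∑ j, MvPolynomial.C (M i j) * MvPolynomial.X j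

lemma chain_rule_aux {k : Type*} [Field k] {n : ℕ}
    (M : Matrix (Fin n) (Fin n) k) (v : Fin n → k) (hM : Matrix.mulVec M v = v)
    (j : Fin n) (f : MvPolynomial (Fin n) k) :
    eval v (matrixSubst M f) = eval v f ∧
    eval v (pderiv j (matrixSubst M f)) = ∑ i, M i j * eval v (pderiv i f) := by
  induction f using MvPolynomial.induction_on with
  | C a => simp [matrixSubst, MvPolynomial.algebraMap_eq]
  | add p q hp hq =>
    refine ⟨by simp [hp.1, hq.1], ?_⟩
    simp [hp.2, hq.2, mul_add, Finset.sum_add_distrib]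
  | mul_X p m hp =>
    have hX : eval v (matrixSubst M (X m)) = v m := by
      conv_rhs => rw [← hM]
      simp [matrixSubst, Matrix.mulVec, dotProduct]
    have hD : eval v (pderiv j (matrixSubst M (X m))) = M m j := by
      simp [matrixSubst, pderiv_X, Pi.single_apply]
    refine ⟨by simp [hp.1, hX], ?_⟩
    rw [map_mul, Derivation.leibniz]
    simp only [smul_eq_mul, map_add, map_mul, hp.1, hp.2, hX, hD, Derivation.leibniz, pderiv_X,
      eval_X, mul_add, Finset.sum_add_distrib]
    congr 1
    · simp [Pi.single_apply, apply_ite, mul_comm]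
    · rw [Finset.mul_sum]
      exact Finset.sum_congr rfl fun i _ => by ring

/-- **Nagata–Miyata.** Let `k` be a field, `G` a group, `n ≥ 1`, and
`ρ : G →* GL(n,k)` a representation of `G` on `V = kⁿ`, with the induced action of `G`
on `k[x₁,…,xₙ]` given by `(g·f)(w) = f(ρ(g)⁻¹ w)`. Suppose `v ∈ V` is fixed by every
element of `G`, and `f` is a `G`-invariant homogeneous polynomial of degree `d > 0`
with `f(v) ≠ 0`, where the characteristic of `k` does not divide `d`. Then there exists
a `G`-invariant polynomial `f̃` of degree one with `f̃(v) ≠ 0`. -/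
theorem exists_invariant_linear_form_of_invariant_homogeneous
    {k : Type*} [Field k] {G : Type*} [Group G] {n : ℕ} (hn : 1 ≤ n)
    (ρ : G →* Matrix.GeneralLinearGroup (Fin n) k)
    (v : Fin n → k)
    (hv : ∀ g : G, Matrix.mulVec (↑(ρ g) : Matrix (Fin n) (Fin n) k) v = v)
    (f : MvPolynomial (Fin n) k) (d : ℕ) (hd : 0 < d)
    (hchar : ¬ (ringChar k ∣ d))
    (hhom : f.IsHomogeneous d)
    (hinv : ∀ g : G, matrixSubst (↑(ρ g)⁻¹ : Matrix (Fin n) (Fin n) k) f = f)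
    (hfv : MvPolynomial.eval v f ≠ 0) :
    ∃ ft : MvPolynomial (Fin n) k,
      (∀ g : G, matrixSubst (↑(ρ g)⁻¹ : Matrix (Fin n) (Fin n) k) ft = ft) ∧
      ft.IsHomogeneous 1 ∧ MvPolynomial.eval v ft ≠ 0 := by
  refine ⟨∑ i, C (eval v (pderiv i f)) * X i, fun g => ?_, ?_, ?_⟩
  · have hM : Matrix.mulVec (↑(ρ g)⁻¹ : Matrix (Fin n) (Fin n) k) v = v := by
      have h := hv g⁻¹
      rw [map_inv] at h
      simpa using h
    have key : ∀ j, eval v (pderiv j f) =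
        ∑ i, (↑(ρ g)⁻¹ : Matrix (Fin n) (Fin n) k) i j * eval v (pderiv i f) := fun j => by
      have h := (chain_rule_aux _ v hM j f).2
      rwa [hinv g] at h
    generalize (↑(ρ g)⁻¹ : Matrix (Fin n) (Fin n) k) = M at key
    have e : ∀ i, matrixSubst M (X i) = ∑ j, C (M i j) * X j := fun i => by
      simp [matrixSubst]
    have e2 : ∀ a : k, matrixSubst M (C a) = C a := fun a => by
      simp [matrixSubst, MvPolynomial.algebraMap_eq]
    simp only [map_sum, map_mul, e, e2, Finset.mul_sum]
    rw [Finset.sum_comm]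
    refine Finset.sum_congr rfl fun j _ => ?_
    conv_rhs => rw [key j]
    rw [map_sum, Finset.sum_mul]
    refine Finset.sum_congr rfl fun i _ => ?_
    rw [C_mul]; ring
  · refine IsHomogeneous.sum _ _ _ fun i _ => ?_
    simpa using (isHomogeneous_C (Fin n) (eval v (pderiv i f))).mul (isHomogeneous_X k i)
  · have h := congrArg (eval v) hhom.sum_X_mul_pderiv
    have h2 : eval v (∑ i, C (eval v (pderiv i f)) * X i) = (d : k) * eval v f := by
      simpa [mul_comm] using h
    rw [h2]
    exact mul_ne_zero (fun h0 => hchar ((ringChar.spec k d).1 h0)) hfv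
end

section
/- Let k be a field, G a group, n ≥ 1, and ρ : G →* GL(n,k) a representation of G on V = kⁿ. Let v ∈ V be fixed by every element of G, and suppose there exists a G-invariant homogeneous polynomial of positive degree not vanishing at v. Let d be the least positive degree of such a polynomial. Then either d = 1, or the characteristic of k is a prime p > 0 and p divides d. In particular, if char k = 0 then d = 1. -/
open MvPolynomial

/-- The directional derivative along `v`. -/
noncomputable def dirDeriv {k : Type*} [Field k] {n : ℕ} (v : Fin n → k)
    (f : MvPolynomial (Fin n) k) : MvPolynomial (Fin n) k :=
  ∑ i, C (v i) * pderiv i f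

theorem dirDeriv_add {k : Type*} [Field k] {n : ℕ} (v : Fin n → k)
    (f g : MvPolynomial (Fin n) k) : dirDeriv v (f + g) = dirDeriv v f + dirDeriv v g := by
  simp [dirDeriv, mul_add, Finset.sum_add_distrib]

theorem dirDeriv_mul {k : Type*} [Field k] {n : ℕ} (v : Fin n → k)
    (f g : MvPolynomial (Fin n) k) :
    dirDeriv v (f * g) = dirDeriv v f * g + f * dirDeriv v g := by
  simp only [dirDeriv, Finset.sum_mul, Finset.mul_sum, ← Finset.sum_add_distrib]
  refine Finset.sum_congr rfl fun i _ => ?_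
  rw [pderiv_mul]
  ring

theorem dirDeriv_C {k : Type*} [Field k] {n : ℕ} (v : Fin n → k) (a : k) :
    dirDeriv v (C a) = 0 := by
  simp [dirDeriv]

theorem dirDeriv_X {k : Type*} [Field k] {n : ℕ} (v : Fin n → k) (j : Fin n) :
    dirDeriv v (X j) = C (v j) := by
  simp [dirDeriv, pderiv_X, Pi.single_apply]

theorem dirDeriv_matrixSubst_X {k : Type*} [Field k] {n : ℕ} (v : Fin n → k)
    (M : Matrix (Fin n) (Fin n) k) (hM : Matrix.mulVec M v = v) (i : Fin n) :
    dirDeriv v (matrixSubst M (X i)) = C (v i) := by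
  have h : ∀ s : Finset (Fin n), dirDeriv v (∑ j ∈ s, C (M i j) * X j)
      = C (∑ j ∈ s, M i j * v j) := by
    intro s
    induction s using Finset.induction_on with
    | empty => simp [dirDeriv]
    | insert a s ha ih =>
      rw [Finset.sum_insert ha, Finset.sum_insert ha, dirDeriv_add, ih, dirDeriv_mul,
        dirDeriv_C, dirDeriv_X]
      simp
  have h2 := congrFun hM i
  rw [matrixSubst, aeval_X, h]
  congr 1

theorem dirDeriv_matrixSubst {k : Type*} [Field k] {n : ℕ} (v : Fin n → k)
    (M : Matrix (Fin n) (Fin n) k) (hM : Matrix.mulVec M v = v)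
    (f : MvPolynomial (Fin n) k) :
    dirDeriv v (matrixSubst M f) = matrixSubst M (dirDeriv v f) := by
  have hC : ∀ a : k, matrixSubst M (C a) = C a := fun a => by
    simp [matrixSubst, algebraMap_eq]
  induction f using MvPolynomial.induction_on with
  | C a => rw [hC, dirDeriv_C, map_zero]
  | add p q hp hq => rw [map_add, dirDeriv_add, dirDeriv_add, map_add, hp, hq]
  | mul_X p i hp =>
    rw [map_mul, dirDeriv_mul, dirDeriv_mul, hp, dirDeriv_matrixSubst_X v M hM, dirDeriv_X,
      map_add, map_mul, map_mul, hC]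

theorem eval_dirDeriv {k : Type*} [Field k] {n : ℕ} (v : Fin n → k) {d : ℕ}
    {f : MvPolynomial (Fin n) k} (hf : f.IsHomogeneous d) :
    eval v (dirDeriv v f) = d * eval v f := by
  have h := congrArg (eval v) hf.sum_X_mul_pderiv
  simpa [dirDeriv] using h

theorem dirDeriv_isHomogeneous {k : Type*} [Field k] {n : ℕ} (v : Fin n → k) {d : ℕ}
    {f : MvPolynomial (Fin n) k} (hf : f.IsHomogeneous d) :
    (dirDeriv v f).IsHomogeneous (d - 1) := by
  refine IsHomogeneous.sum _ _ _ fun i _ => ?_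
  exact hf.pderiv.C_mul _

/-- Let `k` be a field, `G` a group, `n ≥ 1`, and `ρ : G →* GL(n,k)` a
representation of `G` on `V = kⁿ`. Let `v ∈ V` be fixed by every element of `G`, and suppose
there exists a `G`-invariant homogeneous polynomial of positive degree not vanishing at `v`.
Let `d` be the least positive degree of such a polynomial. Then either `d = 1`, or the
characteristic of `k` is a prime `p > 0` and `p` divides `d`.
(In particular, if `char k = 0` then `d = 1`.) -/
theorem least_positive_invariant_degree_eq_one_or_char_dvd
    {k : Type*} [Field k] {G : Type*} [Group G] {n : ℕ} (hn : 1 ≤ n)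
    (ρ : G →* Matrix.GeneralLinearGroup (Fin n) k)
    (v : Fin n → k)
    (hv : ∀ g : G, Matrix.mulVec (↑(ρ g) : Matrix (Fin n) (Fin n) k) v = v)
    (d : ℕ)
    (hd : IsLeast {e : ℕ | 0 < e ∧ ∃ f : MvPolynomial (Fin n) k,
      (∀ g : G, matrixSubst (↑(ρ g)⁻¹ : Matrix (Fin n) (Fin n) k) f = f) ∧
      f.IsHomogeneous e ∧ MvPolynomial.eval v f ≠ 0} d) :
    d = 1 ∨ ((ringChar k).Prime ∧ ringChar k ∣ d) := by
  obtain ⟨⟨hd0, f, hinv, hhom, hne⟩, hmin⟩ := hd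
  by_cases h1 : d = 1
  · exact Or.inl h1
  right
  have hinvv : ∀ g : G, Matrix.mulVec (↑(ρ g)⁻¹ : Matrix (Fin n) (Fin n) k) v = v := by
    intro g
    have h := hv g⁻¹
    rw [map_inv] at h
    simpa using h
  have hdk : (d : k) = 0 := by
    by_contra hdk
    have hle : d ≤ d - 1 := hmin ⟨by omega, dirDeriv v f, fun g => by
      rw [← dirDeriv_matrixSubst v _ (hinvv g), hinv g], dirDeriv_isHomogeneous v hhom, by
      rw [eval_dirDeriv v hhom]
      exact mul_ne_zero hdk hne⟩
    omega
  have hdvd : ringChar k ∣ d := (ringChar.spec k d).1 hdk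
  refine ⟨?_, hdvd⟩
  rcases CharP.char_is_prime_or_zero k (ringChar k) with h | h
  · exact h
  · rw [h, zero_dvd_iff] at hdvd
    omega
end

section
/- Let k be a field, G a group, N a normal subgroup of G, n ≥ 1, and ρ : G →* GL(n,k) a representation of G on V = kⁿ. Let v ∈ V be fixed by every element of G, and suppose there is an N-invariant homogeneous polynomial f₀ of degree d > 0 with f₀(v) ≠ 0. Assume further there is a natural number D ≥ 1 with the following property: for every finite-dimensional k-linear representation W of G on which N acts trivially and every nonzero G-fixed vector w ∈ W, there exists a G-invariant homogeneous polynomial function on W of positive degree at most D that does not vanish at w. Then there exists a G-invariant homogeneous polynomial on V of positive degree at most d·D that does not vanish at v. -/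
open MvPolynomial

theorem matrixSubst_X {k : Type*} [Field k] {n : ℕ} (M : Matrix (Fin n) (Fin n) k) (i : Fin n) :
    matrixSubst M (X i) = ∑ j, C (M i j) * X j := by
  simp [matrixSubst]

theorem matrixSubst_matrixSubst {k : Type*} [Field k] {n : ℕ} (M P : Matrix (Fin n) (Fin n) k)
    (f : MvPolynomial (Fin n) k) :
    matrixSubst M (matrixSubst P f) = matrixSubst (P * M) f := by
  have : (matrixSubst M).comp (matrixSubst P) = matrixSubst (P * M) := by
    apply MvPolynomial.algHom_ext
    intro i
    simp only [AlgHom.comp_apply, matrixSubst_X, map_sum, map_mul, Matrix.mul_apply,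
      MvPolynomial.algHom_C, MvPolynomial.algebraMap_eq, Finset.mul_sum, Finset.sum_mul]
    rw [Finset.sum_comm]
    simp only [mul_assoc]
  rw [← this]; rfl

theorem matrixSubst_one' {k : Type*} [Field k] {n : ℕ} (f : MvPolynomial (Fin n) k) :
    matrixSubst (1 : Matrix (Fin n) (Fin n) k) f = f := by
  have : matrixSubst (1 : Matrix (Fin n) (Fin n) k) = AlgHom.id k _ := by
    apply MvPolynomial.algHom_ext
    intro i
    simp [matrixSubst_X, Matrix.one_apply]
  rw [this]; rfl

theorem eval_matrixSubst {k : Type*} [Field k] {n : ℕ} (M : Matrix (Fin n) (Fin n) k)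
    (v : Fin n → k) (f : MvPolynomial (Fin n) k) :
    eval v (matrixSubst M f) = eval (M.mulVec v) f := by
  have : (aeval v).comp (matrixSubst M) = aeval (R := k) (M.mulVec v) := by
    apply MvPolynomial.algHom_ext
    intro i
    simp [matrixSubst_X, Matrix.mulVec, dotProduct]
  have h := DFunLike.congr_fun this f
  simpa [aeval_eq_eval] using h

theorem matrixSubst_hom {k : Type*} [Field k] {n d : ℕ} (M : Matrix (Fin n) (Fin n) k)
    (f : MvPolynomial (Fin n) k) (hf : f.IsHomogeneous d) :
    (matrixSubst M f).IsHomogeneous d := by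
  have := hf.aeval (fun i => ∑ j, C (M i j) * X j) (n := 1) (fun i => by
    apply IsHomogeneous.sum
    intro j _
    simpa using (isHomogeneous_C (Fin n) (M i j)).mul (isHomogeneous_X k j))
  simpa [matrixSubst] using this

theorem finite_homogeneous (k : Type*) [Field k] (n d : ℕ) :
    Module.Finite k (homogeneousSubmodule (Fin n) k d) :=
  Module.Finite.iff_fg.mpr (homogeneousSubmodule_fg _ _ d)

/-- Let `k` be a field, `G` a group, `N ⊴ G`, `n ≥ 1`, and `ρ : G →* GL(n,k)`
a representation of `G` on `V = kⁿ`. Let `v ∈ V` be fixed by every element of `G`, and suppose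
there is an `N`-invariant homogeneous polynomial `f₀` of degree `d > 0` with `f₀(v) ≠ 0`.
Assume further there is a natural number `D ≥ 1` such that: for every finite-dimensional
`k`-linear representation `W` of `G` on which `N` acts trivially and every nonzero `G`-fixed
vector `w ∈ W`, there exists a `G`-invariant homogeneous polynomial function on `W` of positive
degree at most `D` not vanishing at `w`. Then there exists a `G`-invariant homogeneous
polynomial on `V` of positive degree at most `d·D` not vanishing at `v`. -/
theorem exists_invariant_of_relative_invariant
    {k : Type*} [Field k] {G : Type*} [Group G] {n : ℕ} (hn : 1 ≤ n)
    (N : Subgroup G) (hNnormal : N.Normal)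
    (ρ : G →* Matrix.GeneralLinearGroup (Fin n) k)
    (v : Fin n → k)
    (hv : ∀ g : G, Matrix.mulVec (↑(ρ g) : Matrix (Fin n) (Fin n) k) v = v)
    (f₀ : MvPolynomial (Fin n) k) (d : ℕ) (hd : 0 < d)
    (hf₀hom : f₀.IsHomogeneous d)
    (hf₀inv : ∀ g ∈ N, matrixSubst (↑(ρ g)⁻¹ : Matrix (Fin n) (Fin n) k) f₀ = f₀)
    (hf₀v : MvPolynomial.eval v f₀ ≠ 0)
    (D : ℕ) (hD : 1 ≤ D)
    (hDprop : ∀ (m : ℕ) (σ : G →* Matrix.GeneralLinearGroup (Fin m) k),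
      (∀ g ∈ N, σ g = 1) →
      ∀ w : Fin m → k, w ≠ 0 →
        (∀ g : G, Matrix.mulVec (↑(σ g) : Matrix (Fin m) (Fin m) k) w = w) →
        ∃ (F : MvPolynomial (Fin m) k) (e : ℕ), 0 < e ∧ e ≤ D ∧ F.IsHomogeneous e ∧
          (∀ g : G, matrixSubst (↑(σ g)⁻¹ : Matrix (Fin m) (Fin m) k) F = F) ∧
          MvPolynomial.eval w F ≠ 0) :
    ∃ (F : MvPolynomial (Fin n) k) (e : ℕ), 0 < e ∧ e ≤ d * D ∧ F.IsHomogeneous e ∧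
      (∀ g : G, matrixSubst (↑(ρ g)⁻¹ : Matrix (Fin n) (Fin n) k) F = F) ∧
      MvPolynomial.eval v F ≠ 0 := by
  classical
  let S : G → MvPolynomial (Fin n) k →ₐ[k] MvPolynomial (Fin n) k :=
    fun g => matrixSubst (↑(ρ g)⁻¹ : Matrix (Fin n) (Fin n) k)
  have S_mul : ∀ g h f, S (g * h) f = S g (S h f) := by
    intro g h f
    simp only [S, matrixSubst_matrixSubst]
    congr 2
    simp [Matrix.mul_inv_rev]
  have S_one : ∀ f, S 1 f = f := by
    intro f
    simp only [S, map_one, inv_one, Units.val_one]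
    exact matrixSubst_one' f
  have S_eval : ∀ g f, eval v (S g f) = eval v f := by
    intro g f
    simp only [S, eval_matrixSubst]
    congr 2
    have := hv g⁻¹
    rwa [map_inv] at this
  let U : Submodule k (MvPolynomial (Fin n) k) :=
    homogeneousSubmodule (Fin n) k d ⊓ ⨅ h : N, LinearMap.eqLocus (S h).toLinearMap LinearMap.id
  have memU : ∀ f, f ∈ U ↔ f.IsHomogeneous d ∧ ∀ h ∈ N, S h f = f := by
    intro f
    simp [U, Submodule.mem_iInf, LinearMap.mem_eqLocus]
  have S_U : ∀ g, ∀ f ∈ U, (S g).toLinearMap f ∈ U := by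
    intro g f hf
    rw [memU] at hf ⊢
    refine ⟨matrixSubst_hom _ _ hf.1, fun h hh => ?_⟩
    have h1 := hf.2 (g⁻¹ * h * g) (by simpa using hNnormal.conj_mem h hh g⁻¹)
    change S h (S g f) = S g f
    rw [← S_mul]
    conv_rhs => rw [← h1, ← S_mul]
    congr 2
    group
  have : Module.Finite k U := by
    have := finite_homogeneous k n d
    exact Submodule.finiteDimensional_of_le (S₂ := homogeneousSubmodule (Fin n) k d) inf_le_left
  let T : G →* (U →ₗ[k] U) :=
    { toFun := fun g => (S g).toLinearMap.restrict (S_U g)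
      map_one' := by
        ext1 f
        exact Subtype.ext (S_one f)
      map_mul' := by
        intro g h
        ext1 f
        exact Subtype.ext (S_mul g h f) }
  let b := Module.finBasis k U
  let m := Module.finrank k U
  let A : G → Matrix (Fin m) (Fin m) k := fun g => LinearMap.toMatrix b b (T g)
  have A_mul : ∀ g h, A (g * h) = A g * A h := by
    intro g h
    simp only [A, map_mul]
    exact LinearMap.toMatrix_mul b _ _
  have A_one : A 1 = 1 := by
    simp only [A, map_one]
    exact LinearMap.toMatrix_one b
  let p : Fin m → MvPolynomial (Fin n) k := fun i => (b i : MvPolynomial (Fin n) k)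
  have A_p : ∀ g i, S g (p i) = ∑ j, C (A g j i) * p j := by
    intro g i
    have h := b.sum_repr (T g (b i))
    have h2 := congrArg (Subtype.val) h
    rw [Submodule.coe_sum] at h2
    change _ = S g (p i) at h2
    rw [← h2]
    refine Finset.sum_congr rfl fun j _ => ?_
    simp [A, LinearMap.toMatrix_apply, p, smul_eq_C_mul]
  let σ₀ : G →* Matrix (Fin m) (Fin m) k :=
    { toFun := fun g => (A g⁻¹).transpose
      map_one' := by simp [A_one]
      map_mul' := by
        intro g h
        simp [A_mul, Matrix.transpose_mul] }
  let σ : G →* Matrix.GeneralLinearGroup (Fin m) k := σ₀.toHomUnits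
  have hσ : ∀ g, (↑(σ g) : Matrix (Fin m) (Fin m) k) = (A g⁻¹).transpose := fun g => rfl
  have hσi : ∀ g, (↑(σ g)⁻¹ : Matrix (Fin m) (Fin m) k) = (A g).transpose := by
    intro g
    have := hσ g⁻¹
    rwa [inv_inv, map_inv] at this
  have hσN : ∀ g ∈ N, σ g = 1 := by
    intro g hg
    apply Units.ext
    rw [hσ]
    have : T g⁻¹ = 1 := by
      ext1 f
      exact Subtype.ext (((memU _).1 f.2).2 _ (N.inv_mem hg))
    simp only [A, this]
    rw [LinearMap.toMatrix_one]
    simp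
  let w : Fin m → k := fun i => eval v (p i)
  have hw : w ≠ 0 := by
    intro h0
    apply hf₀v
    have hU : f₀ ∈ U := (memU _).2 ⟨hf₀hom, hf₀inv⟩
    have h := congrArg Subtype.val (b.sum_repr ⟨f₀, hU⟩)
    rw [Submodule.coe_sum] at h
    change _ = f₀ at h
    rw [← h, map_sum]
    refine Finset.sum_eq_zero fun i _ => ?_
    have : eval v (p i) = 0 := congrFun h0 i
    simp only [Submodule.coe_smul, smul_eval]
    change _ * eval v (p i) = 0
    rw [this, mul_zero]
  have hwfix : ∀ g, Matrix.mulVec (↑(σ g) : Matrix (Fin m) (Fin m) k) w = w := by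
    intro g
    rw [hσ]
    ext i
    have h := S_eval g⁻¹ (p i)
    rw [A_p] at h
    simpa [Matrix.mulVec, dotProduct, w] using h
  obtain ⟨F, e, he, heD, hF, hFinv, hFw⟩ := hDprop m σ hσN w hw hwfix
  refine ⟨aeval p F, d * e, Nat.mul_pos hd he, Nat.mul_le_mul_left d heD,
    hF.aeval p (fun i => ((memU _).1 (b i).2).1), fun g => ?_, ?_⟩
  · change S g (aeval p F) = aeval p F
    have h : (S g).comp (aeval p) = (aeval p).comp (matrixSubst (A g).transpose) := by
      apply MvPolynomial.algHom_ext
      intro i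
      simp [matrixSubst_X, A_p, MvPolynomial.algebraMap_eq]
    have h2 := DFunLike.congr_fun h F
    simp only [AlgHom.comp_apply] at h2
    rw [h2, ← hσi, hFinv]
  · have h : (aeval v).comp (aeval p) = (aeval w : MvPolynomial (Fin m) k →ₐ[k] k) := by
      apply MvPolynomial.algHom_ext
      intro i
      simp [w, aeval_eq_eval]
    have h2 := DFunLike.congr_fun h F
    simp only [AlgHom.comp_apply, aeval_eq_eval] at h2
    intro h0
    apply hFw
    rw [← h0]
    exact h2.symm
end

section
/- Let p be a prime, k a field of characteristic p, G a finite group, and P a Sylow p-subgroup of G. Fix n ≥ 1 and let G act on the polynomial ring R = k[x_{(g,i)} : g ∈ G, i ∈ Fin n] by permuting variables: h·x_{(g,i)} = x_{(hg,i)} (the free permutation module (kG)ⁿ). Let λ : Fin n → k be not identically zero and let v : G × Fin n → k be the point v(g,i) = λ(i) (a nonzero G-fixed point of (kG)ⁿ). Then the least positive degree of a G-invariant homogeneous polynomial f ∈ R with f(v) ≠ 0 equals |P|; that is, every G-invariant homogeneous polynomial of positive degree with f(v) ≠ 0 has degree at least |P|, and there exists such an f of degree exactly |P|. -/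
open MvPolynomial

open Classical in
lemma card_fiber_aux {G : Type*} [Group G] [Fintype G] (P : Subgroup G) (q : G ⧸ P) :
    (Finset.univ.filter (fun g : G => (QuotientGroup.mk g : G ⧸ P) = q)).card = Nat.card P := by
  have h := QuotientGroup.card_preimage_mk P {q}
  rw [Nat.card_coe_set_eq, Nat.card_coe_set_eq, Set.ncard_singleton, mul_one] at h
  rw [← h, ← Set.ncard_coe_finset]
  congr 1
  ext g
  simp

open Classical in
lemma card_dvd_sum_aux {G : Type*} [Group G] [Fintype G] (P : Subgroup G) (F : G → ℕ)
    (hF : ∀ h ∈ P, ∀ g, F (h * g) = F g) : Nat.card P ∣ ∑ g, F g := by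
  rw [← Equiv.sum_comp (Equiv.inv G) F,
    ← Finset.sum_fiberwise Finset.univ (fun g : G => (QuotientGroup.mk g : G ⧸ P))]
  refine Finset.dvd_sum fun q _ => ?_
  rw [Finset.sum_congr rfl (g := fun _ => F (q.out)⁻¹), Finset.sum_const, card_fiber_aux]
  · simp
  · intro g hg
    have h1 : (QuotientGroup.mk g : G ⧸ P) = QuotientGroup.mk q.out := by
      simpa using (Finset.mem_filter.1 hg).2
    have h2 := QuotientGroup.eq.1 h1
    have := hF _ h2 (q.out)⁻¹
    simpa using this

open Classical in
lemma lower_aux (p : ℕ) (hp : p.Prime) {k : Type*} [Field k] [CharP k p]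
    {Q M : Type*} [Group Q] [Finite Q] (hQ : IsPGroup p Q) [MulAction Q M]
    (S : Finset M) (hS : ∀ (h : Q) m, m ∈ S → h • m ∈ S) (φ : M → k)
    (hφ : ∀ (h : Q) m, φ (h • m) = φ m) (hne : ∑ m ∈ S, φ m ≠ 0) :
    ∃ m ∈ S, ∀ h : Q, h • m = m := by
  have := Fact.mk hp
  by_contra hno
  apply hne
  rw [← Finset.sum_fiberwise_of_maps_to (t := S.image φ) (g := φ)
    (fun m hm => Finset.mem_image_of_mem _ hm)]
  refine Finset.sum_eq_zero fun c _ => ?_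
  rw [Finset.sum_congr rfl (g := fun _ => c) (fun m hm => (Finset.mem_filter.1 hm).2),
    Finset.sum_const, nsmul_eq_mul]
  suffices hd : p ∣ (S.filter (fun m => φ m = c)).card by
    rw [(CharP.cast_eq_zero_iff k p _).2 hd, zero_mul]
  by_contra hd
  let T : SubMulAction Q M :=
    { carrier := {m | m ∈ S ∧ φ m = c}
      smul_mem' := fun h m hm => ⟨hS h m hm.1, (hφ h m).trans hm.2⟩ }
  have hT : (T : Set M) = ↑(S.filter (fun m => φ m = c)) := by
    ext m
    rw [Finset.mem_coe, Finset.mem_filter]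
    exact Iff.rfl
  have : Finite T := (hT ▸ Finset.finite_toSet _ : (T : Set M).Finite).to_subtype
  have hc : Nat.card T = (S.filter (fun m => φ m = c)).card := by
    rw [← Set.ncard_coe_finset, ← hT]; rfl
  obtain ⟨m, hm⟩ := hQ.nonempty_fixed_point_of_prime_not_dvd_card T (by rwa [hc])
  exact hno ⟨m, m.2.1, fun h => congrArg Subtype.val (hm h)⟩

/-- The action on exponents by permuting the variables. -/
@[reducible] noncomputable def expAction {G : Type*} [Group G] (P : Subgroup G) (n : ℕ) :
    MulAction P (G × Fin n →₀ ℕ) where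
  smul h m := m.mapDomain (fun gi => ((h : G) * gi.1, gi.2))
  one_smul m := by
    change m.mapDomain _ = m
    convert Finsupp.mapDomain_id using 2
    ext gi <;> simp
  mul_smul a b m := by
    change m.mapDomain _ = (m.mapDomain _).mapDomain _
    rw [← Finsupp.mapDomain_comp]
    congr 1
    ext gi <;> simp [mul_assoc]

lemma inj_aux {G : Type*} [Group G] (n : ℕ) (h : G) :
    Function.Injective (fun gi : G × Fin n => (h * gi.1, gi.2)) := by
  rintro ⟨a, i⟩ ⟨b, j⟩ hab
  simpa using hab

/-- Let `p` be a prime, `k` a field of characteristic `p`, `G` a finite group,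
and `P` a Sylow `p`-subgroup of `G`. Fix `n ≥ 1` and let `G` act on
`R = k[x_{(g,i)} : g ∈ G, i ∈ Fin n]` by permuting variables, `h·x_{(g,i)} = x_{(hg,i)}`
(the free permutation module `(kG)ⁿ`). Let `λ : Fin n → k` be not identically zero and let
`v : G × Fin n → k` be the point `v(g,i) = λ(i)` (a nonzero `G`-fixed point of `(kG)ⁿ`).
Then the least positive degree of a `G`-invariant homogeneous polynomial `f ∈ R` with
`f(v) ≠ 0` equals `|P|`. -/
theorem isLeast_degree_invariant_free_module_eq_card_sylow
    (p : ℕ) (hp : p.Prime) {k : Type*} [Field k] [CharP k p]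
    {G : Type*} [Group G] [Fintype G] (P : Sylow p G)
    (n : ℕ) (hn : 1 ≤ n) (lam : Fin n → k) (hlam : lam ≠ 0) :
    IsLeast {e : ℕ | 0 < e ∧ ∃ f : MvPolynomial (G × Fin n) k,
        (∀ h : G, MvPolynomial.rename (fun gi : G × Fin n => (h * gi.1, gi.2)) f = f) ∧
        f.IsHomogeneous e ∧
        MvPolynomial.eval (fun gi : G × Fin n => lam gi.2) f ≠ 0}
      (Nat.card P) := by
  classical
  have := Fact.mk hp
  constructor
  · refine ⟨Nat.card_pos, ?_⟩
    obtain ⟨j, hj⟩ : ∃ j, lam j ≠ 0 := by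
      by_contra hcon
      push Not at hcon
      exact hlam (funext hcon)
    refine ⟨∑ q : G ⧸ (P : Subgroup G),
      ∏ g ∈ Finset.univ.filter (fun g : G => (QuotientGroup.mk g : G ⧸ (P : Subgroup G)) = q),
        X (g, j), ?_, ?_, ?_⟩
    · intro h
      simp only [map_sum, map_prod, rename_X]
      refine Fintype.sum_equiv (MulAction.toPerm h) _ _ fun q => ?_
      refine Finset.prod_bij (fun g _ => h * g) ?_ ?_ ?_ ?_
      · intro g hg
        have := (Finset.mem_filter.1 hg).2
        simp [← this]
      · intro a _ b _ hab
        simpa using hab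
      · intro b hb
        refine ⟨h⁻¹ * b, ?_, by simp⟩
        have := (Finset.mem_filter.1 hb).2
        simp only [Finset.mem_filter, Finset.mem_univ, true_and]
        have h3 : (QuotientGroup.mk (h⁻¹ * b) : G ⧸ (P : Subgroup G)) =
          h⁻¹ • (QuotientGroup.mk b : G ⧸ (P : Subgroup G)) := rfl
        rw [h3, this]
        simp
      · intros; rfl
    · refine IsHomogeneous.sum _ _ _ fun q _ => ?_
      have := IsHomogeneous.prod
        (Finset.univ.filter (fun g : G => (QuotientGroup.mk g : G ⧸ (P : Subgroup G)) = q))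
        (fun g => (X (g, j) : MvPolynomial (G × Fin n) k)) (fun _ => 1)
        (fun g _ => isHomogeneous_X _ _)
      rw [Finset.sum_const, card_fiber_aux] at this
      simpa using this
    · simp only [map_sum, map_prod, eval_X, Finset.prod_const, card_fiber_aux, Finset.sum_const,
        nsmul_eq_mul]
      refine mul_ne_zero ?_ (pow_ne_zero _ hj)
      rw [Ne, CharP.cast_eq_zero_iff k p, Finset.card_univ, ← Nat.card_eq_fintype_card]
      exact P.not_dvd_index
  · rintro e ⟨he, f, hinv, hhom, hne⟩
    letI := expAction (P : Subgroup G) n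
    have hsmul : ∀ (h : (P : Subgroup G)) (m : G × Fin n →₀ ℕ),
      h • m = m.mapDomain (fun gi => ((h : G) * gi.1, gi.2)) := fun _ _ => rfl
    have hcoeff : ∀ (h : (P : Subgroup G)) (m : G × Fin n →₀ ℕ),
        coeff (h • m) f = coeff m f := by
      intro h m
      conv_lhs => rw [← hinv h]
      exact coeff_rename_mapDomain _ (inj_aux n _) _ _
    rw [eval_eq] at hne
    obtain ⟨m, hm, hfix⟩ := lower_aux p hp (Q := (P : Subgroup G)) P.isPGroup' f.support
      (fun h m hm => by rw [mem_support_iff] at hm ⊢; rwa [hcoeff])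
      (fun m => coeff m f * ∏ i ∈ m.support, lam i.2 ^ m i)
      (fun h m => by
        rw [hcoeff]
        congr 1
        change (h • m).prod (fun i a => lam i.2 ^ a) = m.prod (fun i a => lam i.2 ^ a)
        rw [hsmul, Finsupp.prod_mapDomain_index_inj (inj_aux n _)]) hne
    have hdeg : ∑ gi, m gi = e := by
      have := hhom (mem_support_iff.1 hm)
      rw [← this, ← Finsupp.degree_eq_sum, Finsupp.degree_eq_weight_one]
      rfl
    refine Nat.le_of_dvd he ?_
    rw [← hdeg, Fintype.sum_prod_type_right]
    refine Finset.dvd_sum fun i _ => card_dvd_sum_aux (P : Subgroup G) _ ?_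
    intro h hh g
    conv_lhs => rw [← hfix ⟨h, hh⟩, hsmul]
    exact Finsupp.mapDomain_apply (inj_aux n h) m (g, i)
end

section
/- Let p be a prime, n ≥ 1, and k a field of characteristic p containing the finite field 𝔽_{pⁿ} (e.g. k algebraically closed of characteristic p). Let G = (𝔽_{pⁿ}, +) be the additive group of 𝔽_{pⁿ}. Let G act on the space S of homogeneous polynomials of degree pⁿ − 1 in k[X,Y] by the k-algebra substitution X ↦ X, Y ↦ Y + t·X for t ∈ G. Then S, as a module over the group algebra k[G], is isomorphic to k[G] itself, i.e. S is isomorphic to the regular representation of G over k. -/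
open MvPolynomial

/-- For `t` in the finite field `𝔽_{pⁿ} = GaloisField p n` contained in `k`, the `k`-algebra
substitution `X ↦ X`, `Y ↦ Y + t·X` on `k[X,Y]` (with `X = X 0`, `Y = X 1`); these
substitutions define an action of the additive group `(𝔽_{pⁿ}, +)`. -/
noncomputable def substY (p n : ℕ) [Fact p.Prime] (k : Type*) [Field k]
    [Algebra (GaloisField p n) k] (t : GaloisField p n) :
    MvPolynomial (Fin 2) k →ₐ[k] MvPolynomial (Fin 2) k :=
  MvPolynomial.aeval ![MvPolynomial.X 0,
    MvPolynomial.X 1 + MvPolynomial.C (algebraMap (GaloisField p n) k t) * MvPolynomial.X 0]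


section Helpers

variable (p n : ℕ) [Fact p.Prime] (k : Type*) [Field k] [Algebra (GaloisField p n) k]

/-- Evaluation at `(1, -s)`. -/
noncomputable def evPt (s : GaloisField p n) : MvPolynomial (Fin 2) k →ₐ[k] k :=
  MvPolynomial.aeval ![1, -(algebraMap (GaloisField p n) k s)]

theorem evPt_substY (s t : GaloisField p n) (f : MvPolynomial (Fin 2) k) :
    evPt p n k s (substY p n k t f) = evPt p n k (s - t) f := by
  have h : (evPt p n k s).comp (substY p n k t) = evPt p n k (s - t) := by
    apply MvPolynomial.algHom_ext
    intro i
    fin_cases i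
    · simp [evPt, substY]
    · simp [evPt, substY, MvPolynomial.algHom_C]
      ring
  exact DFunLike.congr_fun h f

theorem substY_mem (d : ℕ) (t : GaloisField p n) (f : MvPolynomial (Fin 2) k)
    (hf : f.IsHomogeneous d) : (substY p n k t f).IsHomogeneous d := by
  have := hf.aeval (n := 1) ![(MvPolynomial.X 0 : MvPolynomial (Fin 2) k),
    MvPolynomial.X 1 + MvPolynomial.C (algebraMap (GaloisField p n) k t) * MvPolynomial.X 0]
    (by
      intro i
      fin_cases i
      · exact isHomogeneous_X k (0 : Fin 2)
      · refine (isHomogeneous_X k (1 : Fin 2)).add ?_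
        simpa using (isHomogeneous_C (Fin 2) (algebraMap (GaloisField p n) k t)).mul
          (isHomogeneous_X k (0 : Fin 2)))
  simpa only [substY, one_mul] using this

theorem eq_zero_of_dehomog (d : ℕ) (f : MvPolynomial (Fin 2) k) (hf : f.IsHomogeneous d)
    (h : MvPolynomial.aeval ![(1 : Polynomial k), Polynomial.X] f = 0) : f = 0 := by
  by_contra hne
  obtain ⟨m, hm⟩ := MvPolynomial.ne_zero_iff.1 hne
  have hdeg : ∀ a : Fin 2 →₀ ℕ, coeff a f ≠ 0 → a 0 + a 1 = d := by
    intro a ha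
    have := hf ha
    simpa [Finsupp.weight_apply, Finsupp.sum_fintype] using this
  rw [MvPolynomial.aeval_def, MvPolynomial.eval₂_eq'] at h
  have h2 := congrArg (fun P => Polynomial.coeff P (m 1)) h
  simp only [Polynomial.finsetSum_coeff, Polynomial.coeff_zero] at h2
  rw [Finset.sum_eq_single m] at h2
  · simp [Polynomial.algebraMap_eq, Polynomial.coeff_X_pow] at h2
    exact hm h2
  · intro b hb hbm
    have hb' := hdeg b (MvPolynomial.mem_support_iff.1 hb)
    have hm' := hdeg m hm
    have : m 1 ≠ b 1 := by
      intro he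
      apply hbm
      ext i
      fin_cases i
      · simp; omega
      · simp; omega
    simp [Polynomial.algebraMap_eq, Polynomial.coeff_X_pow, this]
  · intro hh
    exact absurd (MvPolynomial.mem_support_iff.2 hm) hh

theorem dehomog_natDegree (d : ℕ) (f : MvPolynomial (Fin 2) k) (hf : f.IsHomogeneous d) :
    (MvPolynomial.aeval ![(1 : Polynomial k), Polynomial.X] f).natDegree ≤ d := by
  rw [MvPolynomial.aeval_def, MvPolynomial.eval₂_eq']
  apply Polynomial.natDegree_sum_le_of_forall_le
  intro a ha
  have h1 := hf (MvPolynomial.mem_support_iff.1 ha)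
  have h1 : a 0 + a 1 = d := by
    simpa [Finsupp.weight_apply, Finsupp.sum_fintype] using h1
  simp [Polynomial.algebraMap_eq]
  refine (Polynomial.natDegree_C_mul_X_pow_le _ _).trans (by omega)

theorem eq_zero_of_evPt (hn : n ≠ 0) (f : MvPolynomial (Fin 2) k)
    (hf : f.IsHomogeneous (p ^ n - 1)) (h : ∀ s, evPt p n k s f = 0) : f = 0 := by
  classical
  apply eq_zero_of_dehomog k _ f hf
  have hinj : Function.Injective (fun s : GaloisField p n => -(algebraMap (GaloisField p n) k s)) :=
    neg_injective.comp (algebraMap (GaloisField p n) k).injective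
  have := Fintype.ofFinite (GaloisField p n)
  refine Polynomial.eq_zero_of_natDegree_lt_card_of_eval_eq_zero _ hinj ?_ ?_
  · intro s
    rw [← h s]
    have h3 : ((Polynomial.aeval (-(algebraMap (GaloisField p n) k s))).restrictScalars k).comp
      (MvPolynomial.aeval ![(1 : Polynomial k), Polynomial.X]) = evPt p n k s := by
      apply MvPolynomial.algHom_ext
      intro i
      fin_cases i <;> simp [evPt]
    rw [← h3]
    simp [Polynomial.aeval_def, Polynomial.eval₂_eq_eval_map]
  · rw [← Nat.card_eq_fintype_card, GaloisField.card p n hn]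
    have := dehomog_natDegree k _ f hf
    have : 0 < p ^ n := pow_pos (Fact.out : p.Prime).pos n
    omega

/-- The evaluation map into functions on the finite field. -/
noncomputable def evFun :
    (MvPolynomial.homogeneousSubmodule (Fin 2) k (p ^ n - 1)) →ₗ[k] (GaloisField p n → k) :=
  LinearMap.pi fun s => (evPt p n k s).toLinearMap ∘ₗ Submodule.subtype _

theorem evFun_apply (f : MvPolynomial.homogeneousSubmodule (Fin 2) k (p ^ n - 1))
    (s : GaloisField p n) : evFun p n k f s = evPt p n k s f := rfl

theorem evFun_bijective (hn : n ≠ 0) : Function.Bijective (evFun p n k) := by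
  classical
  have := Fintype.ofFinite (GaloisField p n)
  constructor
  · rw [injective_iff_map_eq_zero]
    intro f hf
    apply Subtype.ext
    exact eq_zero_of_evPt p n k hn f f.2 (fun s => congrFun hf s)
  · let b : GaloisField p n → MvPolynomial (Fin 2) k := fun s =>
      ∏ u ∈ Finset.univ.erase s, (X 1 + C (algebraMap (GaloisField p n) k u) * X 0)
    have hb : ∀ s, (b s).IsHomogeneous (p ^ n - 1) := by
      intro s
      have h := MvPolynomial.IsHomogeneous.prod (Finset.univ.erase s)
        (fun u => (X 1 + C (algebraMap (GaloisField p n) k u) * X 0 : MvPolynomial (Fin 2) k))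
        (fun _ => 1) (by
          intro u _
          refine (isHomogeneous_X k (1 : Fin 2)).add ?_
          simpa using (isHomogeneous_C (Fin 2) (algebraMap (GaloisField p n) k u)).mul
            (isHomogeneous_X k (0 : Fin 2)))
      have hc : ∑ u ∈ Finset.univ.erase s, (fun _ : GaloisField p n => 1) u = p ^ n - 1 := by
        simp [← Nat.card_eq_fintype_card, GaloisField.card p n hn]
      rw [hc] at h
      exact h
    have hev : ∀ s r, evPt p n k r (b s) =
        ∏ u ∈ Finset.univ.erase s, algebraMap (GaloisField p n) k (u - r) := by
      intro s r
      simp only [b, map_prod]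
      refine Finset.prod_congr rfl fun u _ => ?_
      simp [evPt, MvPolynomial.algHom_C]
      ring
    have hz : ∀ s r, r ≠ s → evPt p n k r (b s) = 0 := by
      intro s r hrs
      rw [hev]
      exact Finset.prod_eq_zero (Finset.mem_erase.2 ⟨hrs, Finset.mem_univ r⟩) (by simp)
    have hnz : ∀ s, evPt p n k s (b s) ≠ 0 := by
      intro s
      rw [hev, Finset.prod_ne_zero_iff]
      intro u hu
      rw [Ne, map_eq_zero, sub_eq_zero]
      exact (Finset.mem_erase.1 hu).1
    intro g
    refine ⟨∑ s, (g s * (evPt p n k s (b s))⁻¹) • ⟨b s, hb s⟩, ?_⟩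
    ext r
    rw [map_sum, Finset.sum_apply, Finset.sum_eq_single r]
    · rw [map_smul, Pi.smul_apply, evFun_apply, smul_eq_mul, mul_assoc, inv_mul_cancel₀ (hnz r),
        mul_one]
    · intro s _ hs
      rw [map_smul, Pi.smul_apply, evFun_apply, hz s r hs.symm, smul_zero]
    · intro h
      exact absurd (Finset.mem_univ r) h

end Helpers

/-- Let `p` be a prime, `n ≥ 1`, and `k` a field of characteristic `p`
containing the finite field `𝔽_{pⁿ}`. Let `G = (𝔽_{pⁿ}, +)` act on the space `S` of
homogeneous polynomials of degree `pⁿ − 1` in `k[X,Y]` by the substitutions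
`X ↦ X, Y ↦ Y + t·X`. Then `S`, as a module over the group algebra `k[G]`, is isomorphic to
`k[G]` itself, i.e. `S` is isomorphic to the regular representation of `G` over `k`: there
is a `k`-linear equivalence `e : S ≃ k[G]` intertwining the action of each `t ∈ G` on `S`
with left multiplication by the group element `t` in `k[G]`. -/
theorem homogeneousSubmodule_iso_regular_representation
    (p n : ℕ) [hp : Fact p.Prime] (hn : 1 ≤ n)
    (k : Type*) [Field k] [CharP k p] [Algebra (GaloisField p n) k] :
    ∃ e : (MvPolynomial.homogeneousSubmodule (Fin 2) k (p ^ n - 1)) ≃ₗ[k]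
        MonoidAlgebra k (Multiplicative (GaloisField p n)),
      ∀ (t : GaloisField p n)
        (f : MvPolynomial.homogeneousSubmodule (Fin 2) k (p ^ n - 1)),
        substY p n k t (f : MvPolynomial (Fin 2) k) =
          ↑(e.symm (MonoidAlgebra.single (Multiplicative.ofAdd t) (1 : k) * e f)) := by
  have hn0 : n ≠ 0 := by omega
  let e₁ := LinearEquiv.ofBijective (evFun p n k) (evFun_bijective p n k hn0)
  let e₂ : (GaloisField p n → k) ≃ₗ[k] MonoidAlgebra k (Multiplicative (GaloisField p n)) :=
    (Finsupp.linearEquivFunOnFinite k k (Multiplicative (GaloisField p n))).symm ≪≫ₗ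
      (MonoidAlgebra.coeffLinearEquiv k).symm
  let e := e₁ ≪≫ₗ e₂
  have he : ∀ f s, (e f).coeff (Multiplicative.ofAdd s) = evPt p n k s f := fun f s => rfl
  refine ⟨e, fun t f => ?_⟩
  have key : e ⟨substY p n k t f, substY_mem p n k _ t f f.2⟩ =
      MonoidAlgebra.single (Multiplicative.ofAdd t) (1 : k) * e f := by
    ext s
    obtain ⟨s, rfl⟩ := Multiplicative.ofAdd.surjective s
    rw [he, evPt_substY, MonoidAlgebra.coeff_single_mul_apply, one_mul, ← ofAdd_neg, ← ofAdd_add, he]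
    congr 2
    ring
  rw [← key, LinearEquiv.symm_apply_apply]
end

section
/- Let k be an infinite field, r a nonzero integer, and m ≥ 1. Let the multiplicative group kˣ act on the polynomial ring k[Y,Z] by k-algebra automorphisms determined by t·Y = t^(−r)·Y and t·Z = t^(mr)·Z. Then the ring of kˣ-invariant polynomials equals the k-subalgebra generated by the single polynomial Y^m·Z, i.e. k[Y,Z]^{kˣ} = k[Y^m Z]. -/
open MvPolynomial

/-- For `t ∈ kˣ`, the `k`-algebra automorphism of `k[Y,Z]` (with `Y = X 0`, `Z = X 1`)
determined by `Y ↦ t^(−r)·Y` and `Z ↦ t^(mr)·Z`. -/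
noncomputable def torusSubst (k : Type*) [Field k] (r : ℤ) (m : ℕ) (t : kˣ) :
    MvPolynomial (Fin 2) k →ₐ[k] MvPolynomial (Fin 2) k :=
  MvPolynomial.aeval
    ![MvPolynomial.C ((t ^ (-r) : kˣ) : k) * MvPolynomial.X 0,
      MvPolynomial.C ((t ^ ((m : ℤ) * r) : kˣ) : k) * MvPolynomial.X 1]

/-- In an infinite field, some unit is not killed by a given nonzero exponent. -/
theorem exists_unit_zpow_ne_one (k : Type*) [Field k] [Infinite k] (n : ℤ) (hn : n ≠ 0) :
    ∃ t : kˣ, t ^ n ≠ 1 := by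
  classical
  have hN : 0 < n.natAbs := Int.natAbs_pos.mpr hn
  obtain ⟨x, hx⟩ := Infinite.exists_notMem_finset
    (insert (0 : k) (Polynomial.nthRoots n.natAbs (1 : k)).toFinset)
  simp only [Finset.mem_insert, Multiset.mem_toFinset, Polynomial.mem_nthRoots hN, not_or] at hx
  refine ⟨Units.mk0 x hx.1, fun h => hx.2 ?_⟩
  have h2 : (Units.mk0 x hx.1) ^ n.natAbs = 1 :=
    pow_natAbs_eq_one.mpr h
  simpa using congrArg Units.val h2

theorem torusSubst_monomial (k : Type*) [Field k] (r : ℤ) (m : ℕ) (t : kˣ)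
    (d : Fin 2 →₀ ℕ) (c : k) :
    torusSubst k r m t (monomial d c) =
      monomial d (((t ^ (r * ((m : ℤ) * d 1 - d 0)) : kˣ) : k) * c) := by
  have h : t ^ (r * ((m : ℤ) * d 1 - d 0)) = (t ^ (-r)) ^ d 0 * (t ^ ((m : ℤ) * r)) ^ d 1 := by
    rw [← zpow_natCast, ← zpow_natCast, ← zpow_mul, ← zpow_mul, ← zpow_add]
    congr 1
    ring
  rw [h, torusSubst, aeval_monomial, monomial_eq, Finsupp.prod_fintype _ _ (by simp),
    Finsupp.prod_fintype _ _ (by simp)]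
  simp only [Fin.prod_univ_two, Matrix.cons_val_zero, Matrix.cons_val_one, mul_pow,
    algebraMap_eq, Units.val_mul, Units.val_pow_eq_pow_val, C_mul, C_pow]
  ring

theorem coeff_torusSubst (k : Type*) [Field k] (r : ℤ) (m : ℕ) (t : kˣ)
    (d : Fin 2 →₀ ℕ) (f : MvPolynomial (Fin 2) k) :
    coeff d (torusSubst k r m t f) =
      ((t ^ (r * ((m : ℤ) * d 1 - d 0)) : kˣ) : k) * coeff d f := by
  classical
  induction f using MvPolynomial.induction_on' with
  | monomial u a =>
    rw [torusSubst_monomial, coeff_monomial, coeff_monomial]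
    split_ifs with h
    · rw [h]
    · simp
  | add p q hp hq => rw [map_add, coeff_add, coeff_add, hp, hq, mul_add]

/-- Let `k` be an infinite field, `r` a nonzero integer, and `m ≥ 1`.
Let `kˣ` act on `k[Y,Z]` by `t·Y = t^(−r)·Y` and `t·Z = t^(mr)·Z`. Then the ring of
`kˣ`-invariant polynomials equals the `k`-subalgebra generated by `Y^m·Z`, i.e.
`k[Y,Z]^{kˣ} = k[Y^m Z]`. -/
theorem torus_invariants_eq_adjoin
    (k : Type*) [Field k] [Infinite k] (r : ℤ) (hr : r ≠ 0) (m : ℕ) (hm : 1 ≤ m)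
    (f : MvPolynomial (Fin 2) k) :
    (∀ t : kˣ, torusSubst k r m t f = f) ↔
      f ∈ Algebra.adjoin k
        ({MvPolynomial.X 0 ^ m * MvPolynomial.X 1} : Set (MvPolynomial (Fin 2) k)) := by
  constructor
  · intro h
    rw [f.as_sum]
    refine Subalgebra.sum_mem _ fun d hd => ?_
    have hd0 : (d 0 : ℤ) = m * d 1 := by
      by_contra hne
      obtain ⟨t, ht⟩ := exists_unit_zpow_ne_one k (r * ((m : ℤ) * d 1 - d 0))
        (mul_ne_zero hr (fun h0 => hne (by linarith)))
      have h1 := coeff_torusSubst k r m t d f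
      rw [h t] at h1
      have h2 := mem_support_iff.mp hd
      exact ht (Units.ext ((mul_eq_right₀ h2).mp h1.symm))
    have hd1 : d 0 = m * d 1 := by exact_mod_cast hd0
    have h3 : monomial d (coeff d f) =
        algebraMap k (MvPolynomial (Fin 2) k) (coeff d f) * (X 0 ^ m * X 1) ^ d 1 := by
      rw [monomial_eq, Finsupp.prod_fintype _ _ (by simp), Fin.prod_univ_two, hd1, mul_pow,
        pow_mul, algebraMap_eq]
    rw [h3]
    exact Subalgebra.mul_mem _ (Subalgebra.algebraMap_mem _ _)
      (Subalgebra.pow_mem _ (Algebra.subset_adjoin (Set.mem_singleton _)) _)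
  · intro hf t
    induction hf using Algebra.adjoin_induction with
    | mem x hx =>
      rw [Set.mem_singleton_iff.mp hx]
      have h4 : (X 0 ^ m * X 1 : MvPolynomial (Fin 2) k) =
          monomial (Finsupp.single 0 m + Finsupp.single 1 1) 1 := by
        rw [X_pow_eq_monomial, X, monomial_mul, one_mul]
      rw [h4, torusSubst_monomial]
      simp
    | algebraMap c => exact AlgHom.commutes _ _
    | add x y _ _ hx hy => rw [map_add, hx, hy]
    | mul x y _ _ hx hy => rw [map_mul, hx, hy]
end

section
/- Let k be an infinite field, r a nonzero integer, and m ≥ 1, with the multiplicative group kˣ acting on k[Y,Z] by t·Y = t^(−r)·Y, t·Z = t^(mr)·Z. Then the least positive degree of a kˣ-invariant homogeneous polynomial f ∈ k[Y,Z] with f(1,1) ≠ 0 equals m + 1; that is, every invariant homogeneous polynomial of positive degree with f(1,1) ≠ 0 has degree at least m + 1, and the invariant Y^m·Z has degree m + 1 and value 1 at (1,1). -/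
open MvPolynomial

theorem torus_exp_eq_zero (k : Type*) [Field k] [Infinite k] (n : ℤ)
    (h : ∀ t : kˣ, t ^ n = 1) : n = 0 := by
  have h1 : ∀ t : kˣ, t ^ n.natAbs = 1 := by
    intro t
    rcases Int.natAbs_eq n with h2 | h2
    · have := h t
      rw [h2, zpow_natCast] at this
      exact this
    · have := h t
      rw [h2, zpow_neg, zpow_natCast, inv_eq_one] at this
      exact this
  have h3 : (Polynomial.X ^ (n.natAbs + 1) : Polynomial k) = Polynomial.X := by
    apply Polynomial.funext
    intro x
    by_cases hx : x = 0
    · simp [hx]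
    · have := congrArg (Units.val) (h1 (Units.mk0 x hx))
      simp only [Units.val_pow_eq_pow_val, Units.val_mk0, Units.val_one] at this
      simp [pow_succ, this]
  have h4 := congrArg Polynomial.natDegree h3
  rw [Polynomial.natDegree_X_pow, Polynomial.natDegree_X] at h4
  omega

theorem torusSubst_coeff (k : Type*) [Field k] (r : ℤ) (m : ℕ) (t : kˣ)
    (f : MvPolynomial (Fin 2) k) (d : Fin 2 →₀ ℕ) :
    coeff d (torusSubst k r m t f) =
      ((t ^ (r * ((m : ℤ) * d 1 - d 0)) : kˣ) : k) * coeff d f := by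
  induction f using MvPolynomial.induction_on' with
  | add p q hp hq => rw [map_add, coeff_add, coeff_add, hp, hq, mul_add]
  | monomial u a =>
    have key : torusSubst k r m t (monomial u a) =
        C ((t ^ (r * ((m : ℤ) * u 1 - u 0)) : kˣ) : k) * monomial u a := by
      have hu : (t ^ (r * ((m : ℤ) * u 1 - u 0)) : kˣ) =
          (t ^ (-r)) ^ (u 0) * (t ^ ((m : ℤ) * r)) ^ (u 1) := by
        rw [← zpow_natCast, ← zpow_natCast, ← zpow_mul, ← zpow_mul, ← zpow_add]
        congr 1
        ring
      rw [hu, torusSubst, aeval_monomial, monomial_eq,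
        Finsupp.prod_fintype _ _ (by simp), Finsupp.prod_fintype _ _ (by simp)]
      simp only [Fin.prod_univ_two, Matrix.cons_val_zero, Matrix.cons_val_one, mul_pow,
        Units.val_mul, Units.val_pow_eq_pow_val, map_mul, map_pow, algebraMap_eq]
      ring
    rw [key, coeff_C_mul, coeff_monomial]
    split_ifs with h
    · rw [h]
    · simp

/-- Let `k` be an infinite field, `r` a nonzero integer, and `m ≥ 1`, with
`kˣ` acting on `k[Y,Z]` by `t·Y = t^(−r)·Y`, `t·Z = t^(mr)·Z`. Then the least positive degree
of a `kˣ`-invariant homogeneous polynomial `f ∈ k[Y,Z]` with `f(1,1) ≠ 0` equals `m + 1`: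
every invariant homogeneous polynomial of positive degree with `f(1,1) ≠ 0` has degree at
least `m + 1`, and the invariant `Y^m·Z` has degree `m + 1` and value `1` at `(1,1)`. -/
theorem isLeast_degree_torus_invariant_at_one_one
    (k : Type*) [Field k] [Infinite k] (r : ℤ) (hr : r ≠ 0) (m : ℕ) (hm : 1 ≤ m) :
    IsLeast {e : ℕ | 0 < e ∧ ∃ f : MvPolynomial (Fin 2) k,
        (∀ t : kˣ, torusSubst k r m t f = f) ∧ f.IsHomogeneous e ∧
        MvPolynomial.eval (fun _ => (1 : k)) f ≠ 0}
      (m + 1) ∧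
    (∀ t : kˣ,
        torusSubst k r m t (MvPolynomial.X 0 ^ m * MvPolynomial.X 1) =
          (MvPolynomial.X 0 ^ m * MvPolynomial.X 1 : MvPolynomial (Fin 2) k)) ∧
    (MvPolynomial.X 0 ^ m * MvPolynomial.X 1 : MvPolynomial (Fin 2) k).IsHomogeneous (m + 1) ∧
    MvPolynomial.eval (fun _ => (1 : k))
      (MvPolynomial.X 0 ^ m * MvPolynomial.X 1 : MvPolynomial (Fin 2) k) = 1 := by
  have inv : ∀ t : kˣ,
      torusSubst k r m t (MvPolynomial.X 0 ^ m * MvPolynomial.X 1) =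
        (MvPolynomial.X 0 ^ m * MvPolynomial.X 1 : MvPolynomial (Fin 2) k) := by
    intro t
    have ht : (t ^ (-r)) ^ m * t ^ ((m : ℤ) * r) = 1 := by
      rw [← zpow_natCast, ← zpow_mul, ← zpow_add]
      have : -r * (m : ℤ) + m * r = 0 := by ring
      rw [this, zpow_zero]
    have ht2 := congrArg (fun u : kˣ => (C (u : k) : MvPolynomial (Fin 2) k)) ht
    simp only [Units.val_mul, Units.val_pow_eq_pow_val, map_mul, map_pow, Units.val_one,
      map_one] at ht2
    simp only [torusSubst, map_mul, map_pow, aeval_X, Matrix.cons_val_zero, Matrix.cons_val_one,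
      mul_pow]
    linear_combination (X 0 ^ m * X 1) * ht2
  have hom : (MvPolynomial.X 0 ^ m * MvPolynomial.X 1 :
      MvPolynomial (Fin 2) k).IsHomogeneous (m + 1) :=
    (isHomogeneous_X_pow 0 m).mul (isHomogeneous_X k 1)
  have ev : MvPolynomial.eval (fun _ => (1 : k))
      (MvPolynomial.X 0 ^ m * MvPolynomial.X 1 : MvPolynomial (Fin 2) k) = 1 := by simp
  refine ⟨⟨⟨by omega, _, inv, hom, by rw [ev]; exact one_ne_zero⟩, ?_⟩, inv, hom, ev⟩
  rintro e ⟨he, f, hf, hfe, hf1⟩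
  have hf0 : f ≠ 0 := by
    rintro rfl
    simp at hf1
  obtain ⟨d, hd⟩ := ne_zero_iff.mp hf0
  have hz : r * ((m : ℤ) * d 1 - d 0) = 0 := by
    apply torus_exp_eq_zero k
    intro t
    have := torusSubst_coeff k r m t f d
    rw [hf t] at this
    exact Units.ext (mul_right_cancel₀ hd (by rw [← this, Units.val_one, one_mul]))
  have hz2 : m * d 1 = d 0 := by
    have := (mul_eq_zero.mp hz).resolve_left hr
    exact_mod_cast sub_eq_zero.mp this
  have hdeg : d 0 + d 1 = e := by
    have := hfe hd
    rw [Finsupp.weight_apply, Finsupp.sum_fintype _ _ (by simp)] at this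
    simpa using this
  have hpos : 1 ≤ d 1 := by
    rcases Nat.eq_zero_or_pos (d 1) with h | h
    · rw [h] at hz2 hdeg
      omega
    · exact h
  have : m * 1 ≤ m * d 1 := Nat.mul_le_mul_left m hpos
  omega
end

section
/- Let k be an algebraically closed field of characteristic 0. Let the group G = (k,+) × (k,+) act on the polynomial ring k[x₀,x₁,x₂,x₃] by k-algebra automorphisms where (s,t) acts by x₀ ↦ x₀, x₁ ↦ x₁ + s·x₀, x₂ ↦ x₂ + s·x₁ + (s²/2 + t)·x₀, x₃ ↦ x₃ + s·x₂ + (s²/2 + t)·x₁ + (s³/6 + s·t)·x₀. Then the ring of G-invariant polynomials equals the k-subalgebra generated by x₀ and f := x₁³ − 3·x₀·x₁·x₂ + 3·x₀²·x₃. -/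
open MvPolynomial

/-- For `(s,t) ∈ k × k`, the `k`-algebra automorphism of `k[x₀,x₁,x₂,x₃]` given by
`x₀ ↦ x₀`, `x₁ ↦ x₁ + s·x₀`, `x₂ ↦ x₂ + s·x₁ + (s²/2 + t)·x₀`,
`x₃ ↦ x₃ + s·x₂ + (s²/2 + t)·x₁ + (s³/6 + s·t)·x₀`; these automorphisms define an action of
the group `(k,+) × (k,+)`. -/
noncomputable def g2Subst (k : Type*) [Field k] (s t : k) :
    MvPolynomial (Fin 4) k →ₐ[k] MvPolynomial (Fin 4) k :=
  MvPolynomial.aeval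
    ![MvPolynomial.X 0,
      MvPolynomial.X 1 + MvPolynomial.C s * MvPolynomial.X 0,
      MvPolynomial.X 2 + MvPolynomial.C s * MvPolynomial.X 1 +
        MvPolynomial.C (s ^ 2 / 2 + t) * MvPolynomial.X 0,
      MvPolynomial.X 3 + MvPolynomial.C s * MvPolynomial.X 2 +
        MvPolynomial.C (s ^ 2 / 2 + t) * MvPolynomial.X 1 +
        MvPolynomial.C (s ^ 3 / 6 + s * t) * MvPolynomial.X 0]

/-- The cubic invariant. -/
noncomputable def g2F (k : Type*) [Field k] : MvPolynomial (Fin 4) k :=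
  MvPolynomial.X 1 ^ 3 -
    MvPolynomial.C 3 * MvPolynomial.X 0 * MvPolynomial.X 1 * MvPolynomial.X 2 +
    MvPolynomial.C 3 * MvPolynomial.X 0 ^ 2 * MvPolynomial.X 3

/-- The subalgebra generated by the two invariants. -/
noncomputable def g2A (k : Type*) [Field k] : Subalgebra k (MvPolynomial (Fin 4) k) :=
  Algebra.adjoin k {MvPolynomial.X 0, g2F k}

lemma g2X_mem (k : Type*) [Field k] : (MvPolynomial.X 0 : MvPolynomial (Fin 4) k) ∈ g2A k :=
  Algebra.subset_adjoin (by simp)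

lemma g2F_mem (k : Type*) [Field k] : g2F k ∈ g2A k :=
  Algebra.subset_adjoin (by simp)

lemma g2C_mem (k : Type*) [Field k] (c : k) :
    (MvPolynomial.C c : MvPolynomial (Fin 4) k) ∈ g2A k :=
  (g2A k).algebraMap_mem c

lemma g2_eval (k : Type*) [Field k] (s t : k) (f : MvPolynomial (Fin 4) k) (x : Fin 4 → k) :
    MvPolynomial.eval x (g2Subst k s t f) =
      MvPolynomial.eval ![x 0, x 1 + s * x 0, x 2 + s * x 1 + (s ^ 2 / 2 + t) * x 0,
        x 3 + s * x 2 + (s ^ 2 / 2 + t) * x 1 + (s ^ 3 / 6 + s * t) * x 0] f := by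
  have h : (MvPolynomial.aeval x).comp (g2Subst k s t) =
      (MvPolynomial.aeval ![x 0, x 1 + s * x 0, x 2 + s * x 1 + (s ^ 2 / 2 + t) * x 0,
        x 3 + s * x 2 + (s ^ 2 / 2 + t) * x 1 + (s ^ 3 / 6 + s * t) * x 0] :
        MvPolynomial (Fin 4) k →ₐ[k] k) := by
    apply MvPolynomial.algHom_ext
    intro i
    fin_cases i <;> simp [g2Subst]
  have := DFunLike.congr_fun h f
  simpa [MvPolynomial.aeval_eq_eval] using this

lemma g2_clear (k : Type*) [Field k] [CharZero k] (f : MvPolynomial (Fin 4) k) :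
    ∃ N : ℕ, ∃ P ∈ g2A k, ∀ x : Fin 4 → k, x 0 ≠ 0 →
      x 0 ^ N * MvPolynomial.eval ![x 0, 0, 0, MvPolynomial.eval x (g2F k) / (3 * x 0 ^ 2)] f =
        MvPolynomial.eval x P := by
  induction f using MvPolynomial.induction_on with
  | C a => exact ⟨0, MvPolynomial.C a, g2C_mem k a, fun x _ => by simp⟩
  | add p q hp hq =>
    obtain ⟨N, P, hP, h⟩ := hp
    obtain ⟨M, Q, hQ, h'⟩ := hq
    refine ⟨N + M, MvPolynomial.X 0 ^ M * P + MvPolynomial.X 0 ^ N * Q,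
      add_mem (mul_mem (pow_mem (g2X_mem k) _) hP) (mul_mem (pow_mem (g2X_mem k) _) hQ),
      fun x hx => ?_⟩
    simp only [map_add, map_mul, map_pow, MvPolynomial.eval_X, ← h x hx, ← h' x hx]
    ring
  | mul_X p i hp =>
    obtain ⟨N, P, hP, h⟩ := hp
    fin_cases i
    · refine ⟨N, P * MvPolynomial.X 0, mul_mem hP (g2X_mem k), fun x hx => ?_⟩
      simp [← h x hx, mul_assoc]
    · exact ⟨0, 0, zero_mem _, fun x hx => by simp⟩
    · exact ⟨0, 0, zero_mem _, fun x hx => by simp⟩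
    · refine ⟨N + 2, P * g2F k * MvPolynomial.C (1 / 3),
        mul_mem (mul_mem hP (g2F_mem k)) (g2C_mem k _), fun x hx => ?_⟩
      rw [map_mul, map_mul, map_mul, ← h x hx, MvPolynomial.eval_C, MvPolynomial.eval_X]
      change x 0 ^ (N + 2) * (_ * (MvPolynomial.eval x (g2F k) / (3 * x 0 ^ 2))) = _
      generalize MvPolynomial.eval x (g2F k) = w
      generalize MvPolynomial.eval _ p = v
      field_simp
      ring

lemma g2_split (k : Type*) [Field k] (p : MvPolynomial (Fin 4) k) (hp : p ∈ g2A k) :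
    ∃ q ∈ g2A k, ∃ r : Polynomial k,
      p = MvPolynomial.X 0 * q + Polynomial.aeval (g2F k) r := by
  refine Algebra.adjoin_induction (p := fun p _ => ∃ q ∈ g2A k, ∃ r : Polynomial k,
      p = MvPolynomial.X 0 * q + Polynomial.aeval (g2F k) r) ?_ ?_ ?_ ?_ hp
  · rintro x (rfl | rfl)
    · exact ⟨1, one_mem _, 0, by simp⟩
    · exact ⟨0, zero_mem _, Polynomial.X, by simp⟩
  · intro c
    exact ⟨0, zero_mem _, Polynomial.C c, by simp⟩
  · rintro x y _ _ ⟨q, hq, r, rfl⟩ ⟨q', hq', r', rfl⟩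
    exact ⟨q + q', add_mem hq hq', r + r', by rw [map_add]; ring⟩
  · rintro x y hx hy ⟨q, hq, r, rfl⟩ ⟨q', hq', r', rfl⟩
    have hr : Polynomial.aeval (g2F k) r ∈ g2A k := by
      have := sub_mem (H := g2A k) hx (mul_mem (g2X_mem k) hq)
      rwa [add_sub_cancel_left] at this
    exact ⟨q * (MvPolynomial.X 0 * q' + Polynomial.aeval (g2F k) r') +
      Polynomial.aeval (g2F k) r * q', add_mem (mul_mem hq hy) (mul_mem hr hq'), r * r', by
        rw [map_mul]; ring⟩

lemma g2_descent (k : Type*) [Field k] (g : MvPolynomial (Fin 4) k)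
    (hg : MvPolynomial.X 0 * g ∈ g2A k) : g ∈ g2A k := by
  obtain ⟨q, hq, r, h⟩ := g2_split k _ hg
  let φ : MvPolynomial (Fin 4) k →ₐ[k] Polynomial k :=
    MvPolynomial.aeval ![0, Polynomial.X, 0, 0]
  have hφ := congrArg φ h
  have hF : φ (g2F k) = Polynomial.X ^ 3 := by simp [φ, g2F]
  have h0 : φ (MvPolynomial.X 0) = 0 := by simp [φ]
  rw [map_add, map_mul, map_mul, h0, zero_mul, zero_mul, zero_add,
    ← Polynomial.aeval_algHom_apply, hF] at hφ
  have h3 : Polynomial.expand k 3 r = 0 := by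
    rw [hφ]
    simp [Polynomial.expand_eq_sum, Polynomial.aeval_eq_sum_range, Polynomial.sum_over_range,
      Algebra.smul_def]
  have hr : r = 0 := (Polynomial.expand_eq_zero (by norm_num)).1 h3
  rw [hr, map_zero, add_zero] at h
  rw [mul_left_cancel₀ (MvPolynomial.X_ne_zero 0) h]
  exact hq

lemma g2_descent_pow (k : Type*) [Field k] (g : MvPolynomial (Fin 4) k) (N : ℕ)
    (hg : MvPolynomial.X 0 ^ N * g ∈ g2A k) : g ∈ g2A k := by
  induction N with
  | zero => simpa using hg
  | succ n ih =>
    apply ih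
    apply g2_descent
    rwa [← mul_assoc, ← pow_succ']

/-- Let `k` be an algebraically closed field of characteristic `0`, and let
`G = (k,+) × (k,+)` act on `k[x₀,x₁,x₂,x₃]` by the automorphisms `g2Subst k s t`. Then the
ring of `G`-invariant polynomials equals the `k`-subalgebra generated by `x₀` and
`f = x₁³ − 3·x₀·x₁·x₂ + 3·x₀²·x₃`. -/
theorem g2_invariants_eq_adjoin
    (k : Type*) [Field k] [IsAlgClosed k] [CharZero k]
    (f : MvPolynomial (Fin 4) k) :
    (∀ s t : k, g2Subst k s t f = f) ↔
      f ∈ Algebra.adjoin k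
        ({MvPolynomial.X 0,
          MvPolynomial.X 1 ^ 3 -
            MvPolynomial.C 3 * MvPolynomial.X 0 * MvPolynomial.X 1 * MvPolynomial.X 2 +
            MvPolynomial.C 3 * MvPolynomial.X 0 ^ 2 * MvPolynomial.X 3} :
          Set (MvPolynomial (Fin 4) k)) := by
  change _ ↔ f ∈ g2A k
  constructor
  · intro h
    obtain ⟨N, P, hP, hN⟩ := g2_clear k f
    apply g2_descent_pow k f (N + 1)
    have : MvPolynomial.X 0 ^ (N + 1) * f = MvPolynomial.X 0 * P := by
      apply MvPolynomial.funext
      intro x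
      simp only [map_mul, map_pow, MvPolynomial.eval_X]
      by_cases hx : x 0 = 0
      · simp [hx]
      · rw [← hN x hx]
        have key := g2_eval k (-(x 1 / x 0)) ((x 1 / x 0) ^ 2 / 2 - x 2 / x 0) f x
        rw [h] at key
        have e : (![x 0, x 1 + -(x 1 / x 0) * x 0,
            x 2 + -(x 1 / x 0) * x 1 +
              ((-(x 1 / x 0)) ^ 2 / 2 + ((x 1 / x 0) ^ 2 / 2 - x 2 / x 0)) * x 0,
            x 3 + -(x 1 / x 0) * x 2 +
              ((-(x 1 / x 0)) ^ 2 / 2 + ((x 1 / x 0) ^ 2 / 2 - x 2 / x 0)) * x 1 +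
              ((-(x 1 / x 0)) ^ 3 / 6 +
                -(x 1 / x 0) * ((x 1 / x 0) ^ 2 / 2 - x 2 / x 0)) * x 0] : Fin 4 → k) =
            ![x 0, 0, 0, MvPolynomial.eval x (g2F k) / (3 * x 0 ^ 2)] := by
          funext i
          fin_cases i
          · simp
          · simp [hx]
          · simp
            field_simp
            ring
          · simp [g2F]
            field_simp
            ring
        rw [e] at key
        rw [← key]
        ring
    rw [this]
    exact mul_mem (g2X_mem k) hP
  · intro hf s t
    have : g2A k ≤ AlgHom.equalizer (g2Subst k s t) (AlgHom.id k _) := by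
      apply Algebra.adjoin_le
      rintro x (rfl | rfl)
      · simp [g2Subst]
      · change g2Subst k s t (g2F k) = g2F k
        apply MvPolynomial.funext
        intro x
        rw [g2_eval]
        simp [g2F]
        field_simp
        ring
    exact this hf
end
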